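/- Fix i ∈ {0,…,e−1}. Let B be a block of multipartitions of n with core block C, and suppose that w(B) ≤ w(C) + K_i(C)·r and δ_i(B) ≥ 0. Then for every multipartition λ in B and every j ∈ {1,…,r}: if i ≠ 0, there is no integer b with b ≡ i−1 (mod e), b ∈ B^j and b+1 ∉ B^j; and if i = 0, there is no integer b with b ≡ e−1 (mod e), b ∈ B^j and b+1, b+e+1 ∉ B^j. (In other words, no component of λ has an abacus configuration with a bead on runner i−1 and an empty position immediately to its right on runner i.) -/

import Mathlib

/-!
Combinatorial framework for multipartitions, residues, β-sets, abacus levels,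
weights, hubs, core blocks and Scopes-type moves, following Fayers and the paper.
Rows and columns of Young diagrams are indexed from 0, so the node in row `b`
and column `c` (0-based) of component `j` has residue `a j + c - b` mod `e`.
-/

open scoped Classical

namespace AK

/-- A partition, given by its (antitone, finitely supported) sequence of parts,
rows indexed from `0`. -/
structure PartitionFun : Type where
  part : ℕ → ℕ
  antitone : Antitone part
  finite_support : ∃ N, ∀ b, N ≤ b → part b = 0

/-- The node in row `b`, column `c` (0-based) belongs to the Young diagram. -/
def PartitionFun.InDiag (lam : PartitionFun) (b c : ℕ) : Prop := c < lam.part b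

/-- The node `(b,c)` is removable: deleting it leaves the diagram of a partition. -/
def PartitionFun.Removable (lam : PartitionFun) (b c : ℕ) : Prop :=
  lam.part b = c + 1 ∧ lam.part (b + 1) ≤ c

/-- The node `(b,c)` is addable: adjoining it gives the diagram of a partition. -/
def PartitionFun.Addable (lam : PartitionFun) (b c : ℕ) : Prop :=
  lam.part b = c ∧ (b = 0 ∨ lam.part b < lam.part (b - 1))

/-- An `r`-multipartition. -/
abbrev Multipartition (r : ℕ) := Fin r → PartitionFun

/-- Nodes: `(b, c, j)` with row `b`, column `c`, component `j`. -/
abbrev Node (r : ℕ) := ℕ × ℕ × Fin r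

/-- The Young diagram of a multipartition, as a set of nodes. -/
def diag {r : ℕ} (lam : Multipartition r) : Set (Node r) :=
  {x | (lam x.2.2).InDiag x.1 x.2.1}

/-- The size `n` of a multipartition of `n`. -/
noncomputable def msize {r : ℕ} (lam : Multipartition r) : ℕ :=
  Set.ncard (diag lam)

/-- `c_i(λ)`: the number of nodes of residue `i` (mod `e`). -/
noncomputable def nodeCount {r : ℕ} (e : ℕ) (a : Fin r → ℤ) (lam : Multipartition r)
    (i : ℤ) : ℕ :=
  Set.ncard {x : Node r | (lam x.2.2).InDiag x.1 x.2.1 ∧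
    (a x.2.2 + (x.2.1 : ℤ) - (x.1 : ℤ)) % (e : ℤ) = i % e}

/-- Number of removable nodes of residue `i` in component `j`. -/
noncomputable def removableCount {r : ℕ} (e : ℕ) (a : Fin r → ℤ) (lam : Multipartition r)
    (i : ℤ) (j : Fin r) : ℕ :=
  Set.ncard {p : ℕ × ℕ | (lam j).Removable p.1 p.2 ∧
    (a j + (p.2 : ℤ) - (p.1 : ℤ)) % (e : ℤ) = i % e}

/-- Number of addable nodes of residue `i` in component `j`. -/
noncomputable def addableCount {r : ℕ} (e : ℕ) (a : Fin r → ℤ) (lam : Multipartition r)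
    (i : ℤ) (j : Fin r) : ℕ :=
  Set.ncard {p : ℕ × ℕ | (lam j).Addable p.1 p.2 ∧
    (a j + (p.2 : ℤ) - (p.1 : ℤ)) % (e : ℤ) = i % e}

/-- `δ^j_i(λ)` = (removable `i`-nodes of component `j`) − (addable `i`-nodes of component `j`). -/
noncomputable def delta {r : ℕ} (e : ℕ) (a : Fin r → ℤ) (lam : Multipartition r)
    (i : ℤ) (j : Fin r) : ℤ :=
  (removableCount e a lam i j : ℤ) - (addableCount e a lam i j : ℤ)

/-- The hub `δ_i(λ) = Σ_j δ^j_i(λ)`. -/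
noncomputable def hub {r : ℕ} (e : ℕ) (a : Fin r → ℤ) (lam : Multipartition r) (i : ℤ) : ℤ :=
  ∑ j : Fin r, delta e a lam i j

/-- Two multipartitions have the same hub. -/
def SameHub {r : ℕ} (e : ℕ) (a : Fin r → ℤ) (lam mu : Multipartition r) : Prop :=
  ∀ i : ℤ, hub e a lam i = hub e a mu i

/-- `d_i(m) = min { δ^j_i(m) : 1 ≤ j ≤ r }`. -/
noncomputable def dmin {r : ℕ} (e : ℕ) (a : Fin r → ℤ) (lam : Multipartition r) (i : ℤ) : ℤ :=
  sInf {x : ℤ | ∃ j : Fin r, delta e a lam i j = x}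

/-- The weight `w(λ) = Σ_j c_{a_j}(λ) − (1/2) Σ_{i∈ℤ/eℤ} (c_i(λ) − c_{i+1}(λ))²`. -/
noncomputable def weight {r : ℕ} (e : ℕ) (a : Fin r → ℤ) (lam : Multipartition r) : ℚ :=
  (∑ j : Fin r, (nodeCount e a lam (a j) : ℚ)) -
    (1 / 2 : ℚ) * ∑ i ∈ Finset.range e,
      ((nodeCount e a lam (i : ℤ) : ℚ) - (nodeCount e a lam ((i : ℤ) + 1) : ℚ)) ^ 2

/-- The β-set `B^j = {λ_b + a_j − b : b ≥ 1}` (here with rows indexed from 0). -/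
def betaSet (aj : ℤ) (lam : PartitionFun) : Set ℤ :=
  {x | ∃ b : ℕ, x = (lam.part b : ℤ) + aj - ((b : ℤ) + 1)}

/-- A partition is an `e`-core: `β ∈ B` implies `β − e ∈ B`. -/
def IsECore (e : ℕ) (aj : ℤ) (lam : PartitionFun) : Prop :=
  ∀ x ∈ betaSet aj lam, x - (e : ℤ) ∈ betaSet aj lam

/-- A multicore: all components are `e`-cores. -/
def IsMulticore {r : ℕ} (e : ℕ) (a : Fin r → ℤ) (lam : Multipartition r) : Prop :=
  ∀ j, IsECore e (a j) (lam j)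

/-- `ℓ^a_{ij}(λ)`: the level of the lowest bead on runner `i`, i.e. the largest `x`
with `x·e + i` in the β-set. -/
noncomputable def level (e : ℕ) (aj : ℤ) (lam : PartitionFun) (i : ℕ) : ℤ :=
  sSup {x : ℤ | x * (e : ℤ) + (i : ℤ) ∈ betaSet aj lam}

/-- `γ^{jk}_i(λ) = ℓ^a_{ij}(λ) − ℓ^a_{ik}(λ)`. -/
noncomputable def gamma {r : ℕ} (e : ℕ) (a : Fin r → ℤ) (lam : Multipartition r)
    (i : ℕ) (j k : Fin r) : ℤ :=
  level e (a j) (lam j) i - level e (a k) (lam k) i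

/-- `γ^{jk}_{il}(λ) = γ^{jk}_i(λ) − γ^{jk}_l(λ)`. -/
noncomputable def gammaD {r : ℕ} (e : ℕ) (a : Fin r → ℤ) (lam : Multipartition r)
    (i l : ℕ) (j k : Fin r) : ℤ :=
  gamma e a lam i j k - gamma e a lam l j k

/-- Move a bead from runner `i` to runner `l` in the β-set `S`: replace the largest
element of `S` congruent to `i` mod `e` by the smallest integer congruent to `l`
mod `e` not in `S`. -/
noncomputable def moveBead (e : ℕ) (i l : ℕ) (S : Set ℤ) : Set ℤ :=
  insert (sInf {x : ℤ | x % (e : ℤ) = (l : ℤ) % e ∧ x ∉ S})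
    (S \ {sSup {x : ℤ | x % (e : ℤ) = (i : ℤ) % e ∧ x ∈ S}})

/-- The effect of `s^{jk}_{il}` on the tuple of β-sets: move a bead from runner `i`
to runner `l` in component `j`, and from runner `l` to runner `i` in component `k`. -/
noncomputable def swapSets {r : ℕ} (e i l : ℕ) (j k : Fin r) (S : Fin r → Set ℤ) :
    Fin r → Set ℤ :=
  Function.update (Function.update S j (moveBead e i l (S j))) k
    (moveBead e l i (Function.update S j (moveBead e i l (S j)) k))

/-- `m' = s^{jk}_{il}(m)`, expressed via β-sets. -/
def IsSwap {r : ℕ} (e : ℕ) (a : Fin r → ℤ) (i l : ℕ) (j k : Fin r)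
    (m m' : Multipartition r) : Prop :=
  ∀ j', betaSet (a j') (m' j') = swapSets e i l j k (fun t => betaSet (a t) (m t)) j'

/-- `λ` lies in a core block: its weight is minimal among the weights of all
multipartitions with the same hub. -/
def MinimalWeight {r : ℕ} (e : ℕ) (a : Fin r → ℤ) (lam : Multipartition r) : Prop :=
  ∀ mu : Multipartition r, SameHub e a lam mu → weight e a lam ≤ weight e a mu

/-- `(b_0,…,b_{e−1})` is a base tuple for `mu` with respect to the multicharge `a'`
(congruent to `a` componentwise mod `e`): each `ℓ^{a'}_{ij}(mu)` is `b i` or `b i + 1`. -/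
def IsBaseTuple {r : ℕ} (e : ℕ) (a : Fin r → ℤ) (mu : Multipartition r)
    (a' : Fin r → ℤ) (b : ℕ → ℤ) : Prop :=
  (∀ j, (e : ℤ) ∣ (a' j - a j)) ∧
    ∀ i < e, ∀ j, level e (a' j) (mu j) i = b i ∨ level e (a' j) (mu j) i = b i + 1

/-- `K_i(C)` for the core block of `mu`: among all base tuples (over all admissible
multicharges), take `b i` maximal and then `b (i−1)` minimal, and set
`K_i = b_i − b_{i−1} − 1` for `i ≠ 0`, `K_0 = b_0 − b_{e−1} − 2`. -/
noncomputable def Kconst {r : ℕ} (e : ℕ) (a : Fin r → ℤ) (mu : Multipartition r)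
    (i : ℕ) : ℤ :=
  let Bi : ℤ := sSup {x : ℤ | ∃ a' bt, IsBaseTuple e a mu a' bt ∧ bt i = x}
  let iprev : ℕ := if i = 0 then e - 1 else i - 1
  let Bp : ℤ := sInf {x : ℤ | ∃ a' bt, IsBaseTuple e a mu a' bt ∧ bt i = Bi ∧ bt iprev = x}
  Bi - Bp - (if i = 0 then 2 else 1)

/-- The map `φ_i : ℤ → ℤ`. -/
def phiMap (e i : ℕ) (x : ℤ) : ℤ :=
  if x % (e : ℤ) = ((i : ℤ) - 1) % e then x + 1
  else if x % (e : ℤ) = (i : ℤ) % e then x - 1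
  else x

/-- Lexicographic order on multipartitions: `λ > μ`. -/
def lexGT {r : ℕ} (lam mu : Multipartition r) : Prop :=
  ∃ j : Fin r, (∀ j' < j, (lam j').part = (mu j').part) ∧
    ∃ i : ℕ, (∀ i' < i, (lam j).part i' = (mu j).part i') ∧
      (mu j).part i < (lam j).part i

/-- `x` is above `y`: `j < j'` or (`j = j'` and `b < b'`). -/
def NodeAbove {r : ℕ} (x y : Node r) : Prop :=
  x.2.2 < y.2.2 ∨ (x.2.2 = y.2.2 ∧ x.1 < y.1)

/-- The order on nodes: `x < y` iff `y` is above `x`. -/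
def NodeLT {r : ℕ} (x y : Node r) : Prop := NodeAbove y x

/-- `N_A(λ)` = (addable `i`-nodes of `λ` below `A`) − (removable `i`-nodes of `λ` below `A`). -/
noncomputable def Nfac {r : ℕ} (e : ℕ) (a : Fin r → ℤ) (lam : Multipartition r)
    (i : ℤ) (A : Node r) : ℤ :=
  (Set.ncard {y : Node r | (lam y.2.2).Addable y.1 y.2.1 ∧
      (a y.2.2 + (y.2.1 : ℤ) - (y.1 : ℤ)) % (e : ℤ) = i % e ∧ NodeAbove A y} : ℤ) -
  (Set.ncard {y : Node r | (lam y.2.2).Removable y.1 y.2.1 ∧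
      (a y.2.2 + (y.2.1 : ℤ) - (y.1 : ℤ)) % (e : ℤ) = i % e ∧ NodeAbove A y} : ℤ)

/-- `lam` is obtained from `mu` by adding one `e`-rim hook to some component:
on β-sets, some `β ∈ B^j` with `β + e ∉ B^j` is replaced by `β + e`. -/
def AddRimHook {r : ℕ} (e : ℕ) (a : Fin r → ℤ) (mu lam : Multipartition r) : Prop :=
  ∃ (j : Fin r) (β : ℤ), β ∈ betaSet (a j) (mu j) ∧ β + (e : ℤ) ∉ betaSet (a j) (mu j) ∧
    betaSet (a j) (lam j) = insert (β + (e : ℤ)) (betaSet (a j) (mu j) \ {β}) ∧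
    ∀ j' ≠ j, betaSet (a j') (lam j') = betaSet (a j') (mu j')

/-- The number of inversions (length) of a permutation of `Fin d`. -/
noncomputable def permLength (d : ℕ) (σ : Equiv.Perm (Fin d)) : ℕ :=
  (Finset.univ.filter (fun p : Fin d × Fin d => p.1 < p.2 ∧ σ p.2 < σ p.1)).card

/-- beta number of row `b` -/
def bet (aj : ℤ) (l : PartitionFun) (b : ℕ) : ℤ := (l.part b : ℤ) + aj - ((b : ℤ) + 1)

/-- residue indicator -/
def ind (e : ℕ) (i x : ℤ) : ℤ := if x % (e : ℤ) = i % e then 1 else 0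

lemma ind_succ (e : ℕ) (i x : ℤ) : ind e (i + 1) (x + 1) = ind e i x := by
  unfold ind
  have : ((x + 1) % (e : ℤ) = (i + 1) % e) ↔ (x % (e : ℤ) = i % e) := by
    constructor
    · intro h; exact Int.ModEq.add_right_cancel' 1 h
    · intro h; exact Int.ModEq.add_right 1 h
  simp only [this]

lemma div_step (e : ℕ) (he : 0 < e) (i x : ℤ) :
    (x - i) / (e : ℤ) = (x - 1 - i) / e + ind e i x := by
  have he' : (0 : ℤ) < e := by exact_mod_cast he
  unfold ind
  have h0 : (x % (e : ℤ) = i % e) ↔ (x - i) % (e : ℤ) = 0 := by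
    rw [Int.emod_eq_emod_iff_emod_sub_eq_zero]
  simp only [h0]
  set y := x - i with hy
  have : x - 1 - i = y - 1 := by ring
  rw [this]
  have h1 := Int.mul_ediv_add_emod y e
  have h2 := Int.emod_nonneg y he'.ne'
  have h3 := Int.emod_lt_of_pos y he'
  split_ifs with h
  · have : (y - 1) / (e : ℤ) = y / e - 1 := by
      rw [Int.ediv_eq_iff_of_pos he']
      constructor <;> nlinarith
    omega
  · have : (y - 1) / (e : ℤ) = y / e := by
      rw [Int.ediv_eq_iff_of_pos he']
      constructor
      · have : 1 ≤ y % (e : ℤ) := by omega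
        nlinarith
      · nlinarith
    omega

lemma cnt_row (e : ℕ) (he : 0 < e) (i lo : ℤ) (n : ℕ) :
    ∑ c ∈ Finset.range n, ind e i (lo + c) =
      (lo + n - 1 - i) / (e : ℤ) - (lo - 1 - i) / e := by
  induction n with
  | zero => simp
  | succ n ih =>
    rw [Finset.sum_range_succ, ih]
    have := div_step e he i (lo + n)
    push_cast
    have e1 : lo + (n + 1 : ℤ) - 1 - i = lo + n - i := by ring
    rw [e1, this]
    ring

lemma nodeCount_eq {r : ℕ} (e : ℕ) (he : 0 < e) (a : Fin r → ℤ) (lam : Multipartition r)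
    (N : ℕ) (hN : ∀ j b, N ≤ b → (lam j).part b = 0) (i : ℤ) :
    (nodeCount e a lam i : ℤ) = ∑ j, ∑ b ∈ Finset.range N,
      ((bet (a j) (lam j) b - i) / (e : ℤ) - (a j - b - 1 - i) / (e : ℤ)) := by
  have hset : {x : Node r | (lam x.2.2).InDiag x.1 x.2.1 ∧
    (a x.2.2 + (x.2.1 : ℤ) - (x.1 : ℤ)) % (e : ℤ) = i % e} =
    ↑(Finset.univ.biUnion fun j : Fin r => (Finset.range N).biUnion fun b =>
      ((Finset.range ((lam j).part b)).filter fun c : ℕ =>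
        (a j + (c : ℤ) - (b : ℤ)) % (e : ℤ) = i % e).image fun c => ((b, c, j) : Node r)) := by
    ext ⟨b, c, j⟩
    simp only [PartitionFun.InDiag, Set.mem_ofPred_eq, Finset.coe_biUnion, Set.mem_iUnion,
      Finset.mem_coe, Finset.mem_univ, Finset.mem_image, Finset.mem_filter, Finset.mem_range,
      Prod.mk.injEq]
    constructor
    · rintro ⟨h1, h2⟩
      refine ⟨j, trivial, b, ?_, c, ⟨h1, h2⟩, rfl, rfl, rfl⟩
      by_contra hb
      have := hN j b (by omega)
      omega
    · rintro ⟨j, -, b, -, c, ⟨h1, h2⟩, rfl, rfl, rfl⟩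
      exact ⟨h1, h2⟩
  unfold nodeCount
  rw [hset, Set.ncard_coe_finset, Finset.card_biUnion]
  · push_cast
    refine Finset.sum_congr rfl fun j _ => ?_
    rw [Finset.card_biUnion]
    · push_cast
      refine Finset.sum_congr rfl fun b _ => ?_
      rw [Finset.card_image_of_injective _ (by intro x y h; simpa using h)]
      rw [Finset.card_filter]
      push_cast
      have := cnt_row e he i (a j - b) ((lam j).part b)
      unfold ind at this
      have e2 : bet (a j) (lam j) b - i = a j - b + ((lam j).part b) - 1 - i := by
        unfold bet; ring
      rw [e2, ← this]
      refine Finset.sum_congr rfl fun c _ => ?_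
      rw [show a j + (c : ℤ) - b = a j - b + c by ring]
    · intro x _ y _ hxy
      rw [Function.onFun, Finset.disjoint_left]
      simp only [Finset.mem_image]
      rintro z ⟨c, -, rfl⟩ ⟨d, -, h⟩
      simp at h
      exact hxy h.1.symm
  · intro x _ y _ hxy
    rw [Function.onFun, Finset.disjoint_left]
    simp only [Finset.mem_image, Finset.mem_biUnion]
    rintro z ⟨c, -, b, -, rfl⟩ ⟨d, -, b', -, h⟩
    simp at h
    exact hxy h.2.2.symm

lemma delta_eq {r : ℕ} (e : ℕ) (a : Fin r → ℤ) (lam : Multipartition r)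
    (N : ℕ) (j : Fin r) (hN : ∀ b, N ≤ b → (lam j).part b = 0) (i : ℤ) :
    delta e a lam i j = (∑ b ∈ Finset.range N, ind e i (bet (a j) (lam j) b)) -
      (∑ b ∈ Finset.range N, ind e i (bet (a j) (lam j) b + 1)) - ind e i (a j - N) := by
  have hR : (removableCount e a lam i j : ℤ) = ∑ b ∈ Finset.range N,
      if (lam j).part (b+1) < (lam j).part b then ind e i (bet (a j) (lam j) b) else 0 := by
    have hset : {p : ℕ × ℕ | (lam j).Removable p.1 p.2 ∧
        (a j + (p.2 : ℤ) - (p.1 : ℤ)) % (e : ℤ) = i % e} =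
        ↑(((Finset.range N).filter fun b => (lam j).part (b+1) < (lam j).part b ∧
          bet (a j) (lam j) b % (e : ℤ) = i % e).image fun b => (b, (lam j).part b - 1)) := by
      ext ⟨b, c⟩
      simp only [PartitionFun.Removable, Set.mem_ofPred_eq, Finset.coe_image, Set.mem_image,
        Finset.mem_coe, Finset.mem_filter, Finset.mem_range, Prod.mk.injEq]
      constructor
      · rintro ⟨⟨h1, h2⟩, h3⟩
        refine ⟨b, ⟨?_, by omega, ?_⟩, rfl, by omega⟩
        · by_contra hb
          have := hN b (by omega)
          omega
        · rw [← h3]; unfold bet; rw [h1]; congr 1; push_cast; ring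
      · rintro ⟨b', ⟨h1, h2, h3⟩, rfl, rfl⟩
        refine ⟨⟨by omega, by omega⟩, ?_⟩
        rw [← h3]; unfold bet; congr 1; omega
    unfold removableCount
    rw [hset, Set.ncard_coe_finset, Finset.card_image_of_injective _
      (by intro x y h; simp at h; exact h.1), Finset.card_filter]
    push_cast
    refine Finset.sum_congr rfl fun b _ => ?_
    unfold ind
    split_ifs <;> simp_all
  have hA : (addableCount e a lam i j : ℤ) = ∑ b ∈ Finset.range (N+1),
      if b = 0 ∨ (lam j).part b < (lam j).part (b-1) then
        ind e i (bet (a j) (lam j) b + 1) else 0 := by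
    have hset : {p : ℕ × ℕ | (lam j).Addable p.1 p.2 ∧
        (a j + (p.2 : ℤ) - (p.1 : ℤ)) % (e : ℤ) = i % e} =
        ↑(((Finset.range (N+1)).filter fun b => (b = 0 ∨ (lam j).part b < (lam j).part (b-1)) ∧
          (bet (a j) (lam j) b + 1) % (e : ℤ) = i % e).image fun b => (b, (lam j).part b)) := by
      ext ⟨b, c⟩
      simp only [PartitionFun.Addable, Set.mem_ofPred_eq, Finset.coe_image, Set.mem_image,
        Finset.mem_coe, Finset.mem_filter, Finset.mem_range, Prod.mk.injEq]
      constructor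
      · rintro ⟨⟨h1, h2⟩, h3⟩
        refine ⟨b, ⟨?_, h2, ?_⟩, rfl, h1⟩
        · by_contra hb
          have := hN (b-1) (by omega)
          omega
        · rw [← h3]; unfold bet; rw [h1]; congr 1; ring
      · rintro ⟨b', ⟨h1, h2, h3⟩, rfl, rfl⟩
        refine ⟨⟨rfl, h2⟩, ?_⟩
        rw [← h3]; unfold bet; congr 1; ring
    unfold addableCount
    rw [hset, Set.ncard_coe_finset, Finset.card_image_of_injective _
      (by intro x y h; simp at h; exact h.1), Finset.card_filter]
    push_cast
    refine Finset.sum_congr rfl fun b _ => ?_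
    unfold ind
    split_ifs <;> simp_all
  have hlast : ind e i (a j - N) = ind e i (bet (a j) (lam j) N + 1) := by
    unfold bet; rw [hN N le_rfl]; congr 1; push_cast; ring
  unfold delta
  rw [hR, hA, hlast, sub_sub, ← Finset.sum_range_succ, Finset.sum_range_succ', 
    Finset.sum_range_succ' (fun b => ind e i (bet (a j) (lam j) b + 1))]
  have key : ∀ b ∈ Finset.range N, (if (lam j).part (b+1) < (lam j).part b then
      ind e i (bet (a j) (lam j) b) else 0) - (if b + 1 = 0 ∨ (lam j).part (b+1) < (lam j).part (b+1-1) then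
        ind e i (bet (a j) (lam j) (b+1) + 1) else 0) = ind e i (bet (a j) (lam j) b) -
        ind e i (bet (a j) (lam j) (b+1) + 1) := by
    intro b _
    simp only [Nat.add_sub_cancel, Nat.succ_ne_zero, false_or]
    split_ifs with h
    · rfl
    · have h2 : (lam j).part (b+1) ≤ (lam j).part b := (lam j).antitone (Nat.le_succ b)
      have h3 : (lam j).part (b+1) = (lam j).part b := by omega
      have : bet (a j) (lam j) (b+1) + 1 = bet (a j) (lam j) b := by
        unfold bet; rw [h3]; push_cast; ring
      rw [this]; ring
  have := Finset.sum_congr rfl key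
  rw [Finset.sum_sub_distrib, Finset.sum_sub_distrib] at this
  simp only [true_or, if_true]
  linarith

lemma bet_strictAnti (aj : ℤ) (l : PartitionFun) : StrictAnti (bet aj l) := by
  intro x y h
  have := l.antitone h.le
  unfold bet
  omega

lemma mem_betaSet (aj : ℤ) (l : PartitionFun) (x : ℤ) :
    x ∈ betaSet aj l ↔ ∃ b, x = bet aj l b := Iff.rfl

lemma level_greatest (e : ℕ) (he : 0 < e) (aj : ℤ) (l : PartitionFun) (k : ℕ) :
    IsGreatest {x : ℤ | x * (e : ℤ) + (k : ℤ) ∈ betaSet aj l} (level e aj l k) := by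
  have he' : (1 : ℤ) ≤ e := by exact_mod_cast he
  have hne : {x : ℤ | x * (e : ℤ) + (k : ℤ) ∈ betaSet aj l}.Nonempty := by
    obtain ⟨N, hN⟩ := l.finite_support
    refine ⟨-(|aj| + N + k + 1), ?_⟩
    have h1 : (|aj| + N + k + 1) * 1 ≤ (|aj| + N + k + 1) * (e : ℤ) := by gcongr
    have h2 := neg_abs_le aj
    refine ⟨(aj - 1 - (-(|aj| + N + k + 1) * (e : ℤ) + k)).toNat, ?_⟩
    rw [hN]
    · have : 0 ≤ (aj - 1 - (-(|aj| + N + k + 1) * (e : ℤ) + k)) := by linarith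
      rw [Int.toNat_of_nonneg this]; push_cast; ring
    · zify
      rw [Int.toNat_of_nonneg] <;> linarith
  have hbd : BddAbove {x : ℤ | x * (e : ℤ) + (k : ℤ) ∈ betaSet aj l} := by
    refine ⟨|aj| + l.part 0, ?_⟩
    rintro x ⟨b, hb⟩
    have h1 := l.antitone (Nat.zero_le b)
    have h2 := le_abs_self aj
    have h4 : x * (e : ℤ) ≤ |aj| + l.part 0 := by omega
    by_contra hx
    push Not at hx
    have h5 := abs_nonneg aj
    have : x * 1 ≤ x * (e : ℤ) := by
      apply mul_le_mul_of_nonneg_left he'; omega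
    omega
  exact ⟨Int.csSup_mem hne hbd, fun x hx => le_csSup hbd hx⟩

lemma level_shift (e : ℕ) (he : 0 < e) (aj m : ℤ) (l : PartitionFun) (k : ℕ) :
    level e (aj + e * m) l k = level e aj l k + m := by
  have h1 := level_greatest e he aj l k
  have h2 := level_greatest e he (aj + e * m) l k
  refine h2.unique ⟨?_, ?_⟩
  · obtain ⟨b, hb⟩ := h1.1
    refine ⟨b, ?_⟩
    rw [add_mul, add_right_comm, hb]; ring
  · rintro x ⟨b, hb⟩
    have := h1.2 (show x - m ∈ _ from ⟨b, by rw [sub_mul]; linarith⟩)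
    linarith

lemma mem_le_level (e : ℕ) (he : 0 < e) (aj : ℤ) (l : PartitionFun) (x : ℤ)
    (hx : x ∈ betaSet aj l) : x / (e : ℤ) ≤ level e aj l (x % (e : ℤ)).toNat := by
  have he' : (0 : ℤ) < e := by exact_mod_cast he
  refine (level_greatest e he aj l _).2 ?_
  show _ ∈ betaSet aj l
  rw [Int.toNat_of_nonneg (Int.emod_nonneg x he'.ne'), mul_comm, Int.mul_ediv_add_emod]
  exact hx

lemma not_mem_lt_level (e : ℕ) (he : 0 < e) (aj : ℤ) (l : PartitionFun) (hc : IsECore e aj l)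
    (x : ℤ) (hx : x ∉ betaSet aj l) : level e aj l (x % (e : ℤ)).toNat < x / (e : ℤ) := by
  have he' : (0 : ℤ) < e := by exact_mod_cast he
  by_contra h
  push Not at h
  apply hx
  have h1 := (level_greatest e he aj l (x % (e : ℤ)).toNat).1
  set L := level e aj l (x % (e : ℤ)).toNat
  simp only [Set.mem_ofPred_eq] at h1
  rw [Int.toNat_of_nonneg (Int.emod_nonneg x he'.ne')] at h1
  have h2 : ∀ n : ℕ, (L - n) * (e : ℤ) + x % e ∈ betaSet aj l := by
    intro n
    induction n with
    | zero => simpa using h1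
    | succ n ih =>
      have := hc _ ih
      convert this using 1
      push_cast; ring
  have h3 := h2 (L - x / e).toNat
  rw [Int.toNat_of_nonneg (by omega)] at h3
  convert h3 using 1
  have := Int.mul_ediv_add_emod x e
  linarith

lemma exists_base {r : ℕ} (e : ℕ) (he : 0 < e) (hr : 0 < r) (a : Fin r → ℤ)
    (mu : Multipartition r) (i : ℕ) (hi : i < e) (hK : 0 ≤ Kconst e a mu i) :
    ∃ a' bt, IsBaseTuple e a mu a' bt ∧
      bt i - bt (if i = 0 then e - 1 else i - 1) = Kconst e a mu i + (if i = 0 then 2 else 1) := by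
  unfold Kconst at hK ⊢
  simp only at hK ⊢
  set Bi : ℤ := sSup {x : ℤ | ∃ a' bt, IsBaseTuple e a mu a' bt ∧ bt i = x} with hBi
  set ip : ℕ := if i = 0 then e - 1 else i - 1 with hip
  have hip' : ip < e := by rw [hip]; split_ifs <;> omega
  by_cases hex : ∃ a' bt, IsBaseTuple e a mu a' bt
  · obtain ⟨a1, b1, h1, h2⟩ := hex
    have hne : {x : ℤ | ∃ a' bt, IsBaseTuple e a mu a' bt ∧ bt i = Bi ∧ bt ip = x}.Nonempty := by
      refine ⟨_, fun j => a1 j + e * (Bi - b1 i), fun k => b1 k + (Bi - b1 i), ⟨?_, ?_⟩, by ring, rfl⟩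
      · intro j
        have := h1 j
        have h3 : a1 j + e * (Bi - b1 i) - a j = (a1 j - a j) + e * (Bi - b1 i) := by ring
        rw [h3]
        exact dvd_add this (dvd_mul_right _ _)
      · intro k hk j
        rw [level_shift e he]
        rcases h2 k hk j with h | h
        · left; rw [h]
        · right; rw [h]; ring
    have hbd : BddBelow {x : ℤ | ∃ a' bt, IsBaseTuple e a mu a' bt ∧ bt i = Bi ∧ bt ip = x} := by
      let j : Fin r := ⟨0, hr⟩
      refine ⟨level e (a j) (mu j) ip - level e (a j) (mu j) i + Bi - 1, ?_⟩
      rintro x ⟨a', bt, ⟨g1, g2⟩, g3, rfl⟩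
      obtain ⟨m, hm⟩ := g1 j
      have hm' : a' j = a j + e * m := by linarith
      have g4 := g2 i hi j
      have g5 := g2 ip hip' j
      rw [hm', level_shift e he] at g4 g5
      omega
    obtain ⟨a', bt, g1, g2, g3⟩ := Int.csInf_mem hne hbd
    refine ⟨a', bt, g1, ?_⟩
    rw [← g3, g2]; ring
  · exfalso
    have e1 : {x : ℤ | ∃ a' bt, IsBaseTuple e a mu a' bt ∧ bt i = x} = ∅ := by
      ext x; simp only [Set.mem_ofPred_eq, Set.mem_empty_iff_false, iff_false]
      rintro ⟨a', bt, h, -⟩; exact hex ⟨a', bt, h⟩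
    have e2 : {x : ℤ | ∃ a' bt, IsBaseTuple e a mu a' bt ∧ bt i = Bi ∧ bt ip = x} = ∅ := by
      ext x; simp only [Set.mem_ofPred_eq, Set.mem_empty_iff_false, iff_false]
      rintro ⟨a', bt, h, -⟩; exact hex ⟨a', bt, h⟩
    rw [e1] at hBi
    rw [e2, hBi] at hK
    have e3 : sSup (∅ : Set ℤ) = 0 := by simp
    have e4 : sInf (∅ : Set ℤ) = 0 := by simp
    rw [e3, e4] at hK
    split_ifs at hK <;> omega

lemma sum_diff_ge (S S0 : Finset ℤ) (g : ℤ → ℤ) (p q : ℤ)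
    (h0 : ∀ x ∈ S0, g x ≤ 0) (h1 : ∀ x ∈ S, x ∉ S0 → 0 ≤ g x)
    (hp : p ∈ S ∨ g p ≤ 0) (hq : q ∉ S) (hq' : q ∈ S0 ∨ 0 ≤ g q) :
    g p - g q ≤ ∑ x ∈ S, g x - ∑ x ∈ S0, g x := by
  have e1 : ∑ x ∈ S, g x = ∑ x ∈ S, max (g x) 0 + ∑ x ∈ S, min (g x) 0 := by
    rw [← Finset.sum_add_distrib]
    refine Finset.sum_congr rfl fun x _ => ?_
    rw [max_add_min, add_zero]
  have e2 : g p ≤ ∑ x ∈ S, max (g x) 0 := by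
    rcases hp with hp | hp
    · exact (le_max_left _ _).trans (Finset.single_le_sum (f := fun x => max (g x) 0)
        (fun x _ => le_max_right _ _) hp)
    · exact hp.trans (Finset.sum_nonneg fun x _ => le_max_right _ _)
  have e3 : ∑ x ∈ S, min (g x) 0 = ∑ x ∈ S ∩ S0, g x := by
    rw [← Finset.sum_filter_add_sum_filter_not S (· ∈ S0), Finset.filter_mem_eq_inter]
    have : ∑ x ∈ S with x ∉ S0, min (g x) 0 = 0 := by
      apply Finset.sum_eq_zero
      intro x hx
      rw [Finset.mem_filter] at hx
      exact min_eq_right (h1 x hx.1 hx.2)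
    rw [this, add_zero]
    refine Finset.sum_congr rfl fun x hx => min_eq_left (h0 x (Finset.mem_inter.1 hx).2)
  have e4 : ∑ x ∈ S0, g x = ∑ x ∈ S ∩ S0, g x + ∑ x ∈ S0 \ S, g x := by
    rw [Finset.inter_comm, Finset.sum_inter_add_sum_sdiff]
  have e5 : ∑ x ∈ S0 \ S, g x ≤ g q := by
    have hneg : ∀ x ∈ S0 \ S, 0 ≤ - g x := fun x hx => by
      have := h0 x (Finset.mem_sdiff.1 hx).1; omega
    rcases hq' with hq' | hq'
    · have := Finset.single_le_sum (f := fun x => - g x) hneg (Finset.mem_sdiff.2 ⟨hq', hq⟩)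
      rw [Finset.sum_neg_distrib] at this
      linarith
    · have := Finset.sum_nonneg hneg
      rw [Finset.sum_neg_distrib] at this
      linarith
  linarith

lemma mem_beta_iff (aj : ℤ) (l : PartitionFun) (N : ℕ) (hN : ∀ b, N ≤ b → l.part b = 0) (x : ℤ) :
    x ∈ betaSet aj l ↔ x ∈ (Finset.range N).image (bet aj l) ∨ x < aj - N := by
  rw [mem_betaSet]
  simp only [Finset.mem_image, Finset.mem_range]
  constructor
  · rintro ⟨b, rfl⟩
    by_cases hb : b < N
    · left; exact ⟨b, hb, rfl⟩
    · right; unfold bet; rw [hN b (by omega)]; push_cast; omega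
  · rintro (⟨b, -, rfl⟩ | h)
    · exact ⟨b, rfl⟩
    · refine ⟨(aj - 1 - x).toNat, ?_⟩
      unfold bet
      rw [hN _ (by omega)]; push_cast; omega

lemma bet_ge (aj : ℤ) (l : PartitionFun) (N b : ℕ) (hb : b < N) : aj - N ≤ bet aj l b := by
  unfold bet; omega

/-- the component inequality -/
lemma comp_ineq (aj : ℤ) (l l0 : PartitionFun) (N : ℕ) (hN : ∀ b, N ≤ b → l.part b = 0)
    (hN0 : ∀ b, N ≤ b → l0.part b = 0) (g : ℤ → ℤ)
    (h0 : ∀ x ∈ betaSet aj l0, g x ≤ 0) (h1 : ∀ x, x ∉ betaSet aj l0 → 0 ≤ g x)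
    (p q : ℤ) (hpq : p = q ∨ (p ∈ betaSet aj l ∧ q ∉ betaSet aj l)) :
    g p - g q ≤ ∑ b ∈ Finset.range N, g (bet aj l b) - ∑ b ∈ Finset.range N, g (bet aj l0 b) := by
  have main : ∀ p q, p ∈ betaSet aj l → q ∉ betaSet aj l → g p - g q ≤
      ∑ b ∈ Finset.range N, g (bet aj l b) - ∑ b ∈ Finset.range N, g (bet aj l0 b) := by
    intro p q hp hq
    rw [← Finset.sum_image (f := g) (g := bet aj l) ((bet_strictAnti aj l).injective.injOn),
      ← Finset.sum_image (f := g) (g := bet aj l0) ((bet_strictAnti aj l0).injective.injOn)]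
    have low : ∀ x, x < aj - N → g x ≤ 0 := fun x hx =>
      h0 x ((mem_beta_iff aj l0 N hN0 x).2 (Or.inr hx))
    rw [mem_beta_iff aj l N hN] at hp hq
    push Not at hq
    have hi : ∀ x, aj - N ≤ x → x ∉ (Finset.range N).image (bet aj l0) → 0 ≤ g x := by
      intro x hx hx'
      apply h1
      rw [mem_beta_iff aj l0 N hN0]
      push Not
      exact ⟨hx', hx⟩
    apply sum_diff_ge
    · intro x hx; exact h0 x ((mem_beta_iff aj l0 N hN0 x).2 (Or.inl hx))
    · intro x hx hx'
      apply hi x _ hx'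
      simp only [Finset.mem_image, Finset.mem_range] at hx
      obtain ⟨b, hb, rfl⟩ := hx
      exact bet_ge aj l N b hb
    · rcases hp with hp | hp
      · exact Or.inl hp
      · exact Or.inr (low p hp)
    · exact hq.1
    · by_cases hq0 : q ∈ (Finset.range N).image (bet aj l0)
      · exact Or.inl hq0
      · exact Or.inr (hi q hq.2 hq0)
  rcases hpq with rfl | ⟨hp, hq⟩
  · have hS : ∑ b ∈ Finset.range N, g (bet aj l0 b) ≤ ∑ b ∈ Finset.range N, g (bet aj l b) := by
      rw [← Finset.sum_image (f := g) (g := bet aj l) ((bet_strictAnti aj l).injective.injOn),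
        ← Finset.sum_image (f := g) (g := bet aj l0) ((bet_strictAnti aj l0).injective.injOn)]
      rw [← Finset.sum_inter_add_sum_sdiff ((Finset.range N).image (bet aj l0))
        ((Finset.range N).image (bet aj l)), 
        ← Finset.sum_inter_add_sum_sdiff ((Finset.range N).image (bet aj l))
        ((Finset.range N).image (bet aj l0)), Finset.inter_comm]
      gcongr 1
      refine (Finset.sum_nonpos ?_).trans (Finset.sum_nonneg ?_)
      · intro x hx
        exact h0 x ((mem_beta_iff aj l0 N hN0 x).2 (Or.inl (Finset.mem_sdiff.1 hx).1))
      · intro x hx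
        rw [Finset.mem_sdiff] at hx
        apply h1
        rw [mem_beta_iff aj l0 N hN0]
        push Not
        refine ⟨hx.2, ?_⟩
        obtain ⟨b, hb, rfl⟩ := Finset.mem_image.1 hx.1
        exact bet_ge aj l N b (Finset.mem_range.1 hb)
    linarith
  · exact main p q hp hq

lemma ind_sum (e : ℕ) (he : 0 < e) (f : ℕ → ℤ) (x : ℤ) :
    ∑ k ∈ Finset.range e, f k * ind e k x = f (x % (e : ℤ)).toNat := by
  have he' : (0 : ℤ) < e := by exact_mod_cast he
  have h2 := Int.emod_nonneg x he'.ne'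
  have h3 := Int.emod_lt_of_pos x he'
  rw [Finset.sum_eq_single (x % (e : ℤ)).toNat]
  · unfold ind
    rw [Int.toNat_of_nonneg h2, Int.emod_emod_of_dvd _ (dvd_refl _)]
    simp
  · intro k hk hne
    unfold ind
    rw [Int.emod_eq_of_lt (a := (k : ℤ)) (by omega) (by have := Finset.mem_range.1 hk; omega)]
    rw [if_neg (by omega), mul_zero]
  · intro h
    exact absurd (Finset.mem_range.2 (by omega)) h

/-- number of beads on runner i -/
def nb {r : ℕ} (e : ℕ) (a : Fin r → ℤ) (lam : Multipartition r) (N : ℕ) (i : ℤ) : ℤ :=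
  ∑ j, ∑ b ∈ Finset.range N, ind e i (bet (a j) (lam j) b)

lemma const_of_step (f : ℤ → ℤ) (h : ∀ i, f (i + 1) = f i) (i : ℤ) : f i = f 0 := by
  induction i using Int.induction_on with
  | zero => rfl
  | succ n ih => rw [h, ih]
  | pred n ih => rw [← ih, ← h]; congr 1; ring

lemma nb_eq {r : ℕ} (e : ℕ) (he : 0 < e) (a : Fin r → ℤ) (lam mu : Multipartition r) (N : ℕ)
    (hN : ∀ j b, N ≤ b → (lam j).part b = 0) (hN0 : ∀ j b, N ≤ b → (mu j).part b = 0)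
    (hs : SameHub e a lam mu) (i : ℤ) : nb e a lam N i = nb e a mu N i := by
  have hub_eq : ∀ (nu : Multipartition r), (∀ j b, N ≤ b → (nu j).part b = 0) → ∀ i : ℤ,
      hub e a nu (i + 1) = nb e a nu N (i + 1) - nb e a nu N i -
        ∑ j, ind e (i + 1) (a j - N) := by
    intro nu hnu i
    unfold hub nb
    rw [← Finset.sum_sub_distrib, ← Finset.sum_sub_distrib]
    refine Finset.sum_congr rfl fun j _ => ?_
    rw [delta_eq e a nu N j (hnu j)]
    simp only [ind_succ]
  have step : ∀ i, (fun i => nb e a lam N i - nb e a mu N i) (i + 1) =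
      (fun i => nb e a lam N i - nb e a mu N i) i := by
    intro i
    have := hs (i + 1)
    rw [hub_eq lam hN, hub_eq mu hN0] at this
    simp only
    linarith
  have hc := const_of_step (fun i => nb e a lam N i - nb e a mu N i) step
  have tot : ∀ (nu : Multipartition r), ∑ k ∈ Finset.range e, nb e a nu N (k : ℤ) = r * N := by
    intro nu
    unfold nb
    rw [Finset.sum_comm]
    have : ∀ j ∈ (Finset.univ : Finset (Fin r)), ∑ k ∈ Finset.range e,
        ∑ b ∈ Finset.range N, ind e (k : ℤ) (bet (a j) (nu j) b) = N := by
      intro j _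
      rw [Finset.sum_comm]
      have := fun x => ind_sum e he (fun _ => 1) x
      simp only [one_mul] at this
      simp [this]
    rw [Finset.sum_congr rfl this]
    simp
  have h1 : ∑ k ∈ Finset.range e, (nb e a lam N (k : ℤ) - nb e a mu N (k : ℤ)) = 0 := by
    rw [Finset.sum_sub_distrib, tot, tot, sub_self]
  rw [Finset.sum_congr rfl (fun (k : ℕ) _ => hc (k : ℤ))] at h1
  simp only [Finset.sum_const, Finset.card_range, nsmul_eq_mul] at h1
  have h2 := hc i
  have he' : (e : ℤ) ≠ 0 := by exact_mod_cast he.ne'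
  have h3 := (mul_eq_zero.1 h1).resolve_left he'
  linarith

lemma count_diff {r : ℕ} (e : ℕ) (he : 0 < e) (a : Fin r → ℤ) (lam mu : Multipartition r) (N : ℕ)
    (hN : ∀ j b, N ≤ b → (lam j).part b = 0) (hN0 : ∀ j b, N ≤ b → (mu j).part b = 0)
    (hs : SameHub e a lam mu) (i : ℤ) :
    (nodeCount e a lam i : ℤ) - nodeCount e a mu i =
      ∑ j, (∑ b ∈ Finset.range N, bet (a j) (lam j) b / (e : ℤ) -
        ∑ b ∈ Finset.range N, bet (a j) (mu j) b / (e : ℤ)) := by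
  let P : Multipartition r → ℤ → ℤ := fun nu i => ∑ j, ∑ b ∈ Finset.range N,
    (bet (a j) (nu j) b - i) / (e : ℤ)
  have hP : ∀ nu i, P nu (i + 1) = P nu i - nb e a nu N i := by
    intro nu i
    simp only [P, nb]
    rw [← Finset.sum_sub_distrib]
    refine Finset.sum_congr rfl fun j _ => ?_
    rw [← Finset.sum_sub_distrib]
    refine Finset.sum_congr rfl fun b _ => ?_
    have := div_step e he i (bet (a j) (nu j) b)
    rw [this]
    rw [show bet (a j) (nu j) b - (i + 1) = bet (a j) (nu j) b - 1 - i by ring]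
    ring
  have h1 : ∀ i, (nodeCount e a lam i : ℤ) - nodeCount e a mu i = P lam i - P mu i := by
    intro i
    rw [nodeCount_eq e he a lam N hN, nodeCount_eq e he a mu N hN0]
    simp only [P, Finset.sum_sub_distrib]
    ring
  rw [h1]
  have h2 := const_of_step (fun i => P lam i - P mu i) (by
    intro i
    simp only [hP, nb_eq e he a lam mu N hN hN0 hs i]
    ring) i
  rw [h2]
  simp [P, Finset.sum_sub_distrib]

lemma weight_diff {r : ℕ} (e : ℕ) (a : Fin r → ℤ) (lam mu : Multipartition r) (t : ℤ)
    (h : ∀ i : ℤ, (nodeCount e a lam i : ℤ) - nodeCount e a mu i = t) :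
    weight e a lam = weight e a mu + r * t := by
  have h' : ∀ i : ℤ, (nodeCount e a lam i : ℚ) = nodeCount e a mu i + t := by
    intro i
    have := h i
    have h2 : (nodeCount e a lam i : ℤ) = nodeCount e a mu i + t := by linarith
    exact_mod_cast h2
  unfold weight
  simp only [h']
  rw [Finset.sum_add_distrib]
  simp only [Finset.sum_const, Finset.card_univ, Fintype.card_fin, nsmul_eq_mul,
    add_sub_add_right_eq_sub]
  ring

lemma sum_bt_eq {r : ℕ} (e : ℕ) (he : 0 < e) (a : Fin r → ℤ) (lam : Multipartition r) (N : ℕ)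
    (bt : ℕ → ℤ) :
    ∑ j, ∑ b ∈ Finset.range N, bt (bet (a j) (lam j) b % (e : ℤ)).toNat =
      ∑ k ∈ Finset.range e, bt k * nb e a lam N k := by
  simp only [← ind_sum e he bt, nb, Finset.mul_sum]
  rw [Finset.sum_comm]
  conv_rhs => rw [Finset.sum_comm]
  rw [Finset.sum_comm]
  refine Finset.sum_congr rfl fun j _ => ?_
  rw [Finset.sum_comm]

lemma core_main {e r : ℕ} (he : 2 ≤ e) (hr : 0 < r) (a : Fin r → ℤ)
    (i : ℕ) (hi : i < e)
    (mu0 : Multipartition r) (hmu0core : IsMulticore e a mu0)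
    (hmu0min : MinimalWeight e a mu0)
    (lam : Multipartition r) (hsame : SameHub e a lam mu0)
    (hw : weight e a lam ≤ weight e a mu0 + (Kconst e a mu0 i : ℚ) * (r : ℚ))
    (j0 : Fin r) (p : ℤ) (hpi : (p + 1) % (e : ℤ) = i)
    (hp : p ∈ betaSet (a j0) (lam j0)) (hq : p + 1 ∉ betaSet (a j0) (lam j0)) : False := by
  have he0 : 0 < e := by omega
  have he' : (0 : ℤ) < e := by exact_mod_cast he0
  choose N1 hN1 using fun j => (lam j).finite_support
  choose N2 hN2 using fun j => (mu0 j).finite_support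
  obtain ⟨N, hNN⟩ : ∃ N, ∀ j, N1 j ≤ N ∧ N2 j ≤ N := by
    refine ⟨∑ j, (N1 j + N2 j), fun j => ?_⟩
    have := Finset.single_le_sum (f := fun j => N1 j + N2 j) (fun _ _ => Nat.zero_le _)
      (Finset.mem_univ j)
    omega
  have hN : ∀ j b, N ≤ b → (lam j).part b = 0 := fun j b hb => hN1 j b ((hNN j).1.trans hb)
  have hN0 : ∀ j b, N ≤ b → (mu0 j).part b = 0 := fun j b hb => hN2 j b ((hNN j).2.trans hb)
  have hcd := count_diff e he0 a lam mu0 N hN hN0 hsame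
  set t := ∑ j, (∑ b ∈ Finset.range N, bet (a j) (lam j) b / (e : ℤ) -
        ∑ b ∈ Finset.range N, bet (a j) (mu0 j) b / (e : ℤ)) with ht
  have hwd := weight_diff e a lam mu0 t hcd
  have hrQ : (0 : ℚ) < r := by exact_mod_cast hr
  have htK : t ≤ Kconst e a mu0 i := by
    have : (t : ℚ) ≤ Kconst e a mu0 i := by
      rw [hwd] at hw
      have : (r : ℚ) * t ≤ r * Kconst e a mu0 i := by linarith
      exact le_of_mul_le_mul_left this hrQ
    exact_mod_cast this
  have ht0 : 0 ≤ t := by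
    have h1 := hmu0min lam (fun i => (hsame i).symm)
    rw [hwd] at h1
    have : (0 : ℚ) ≤ t := by
      have : (r : ℚ) * 0 ≤ r * t := by linarith
      exact le_of_mul_le_mul_left this hrQ
    exact_mod_cast this
  obtain ⟨a', bt, ⟨hb1, hb2⟩, hbK⟩ := exists_base e he0 hr a mu0 i hi (ht0.trans htK)
  choose m hm using hb1
  let g : Fin r → ℤ → ℤ := fun j x => x / (e : ℤ) - bt (x % (e : ℤ)).toNat + m j - 1
  have hlev : ∀ j (x : ℤ), level e (a j) (mu0 j) (x % (e : ℤ)).toNat + m j =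
      bt (x % (e : ℤ)).toNat ∨ level e (a j) (mu0 j) (x % (e : ℤ)).toNat + m j =
      bt (x % (e : ℤ)).toNat + 1 := by
    intro j x
    have h3 := Int.emod_lt_of_pos x he'
    have := hb2 (x % (e : ℤ)).toNat (by omega) j
    rwa [show a' j = a j + e * m j by linarith [hm j], level_shift e he0] at this
  have g0 : ∀ j, ∀ x ∈ betaSet (a j) (mu0 j), g j x ≤ 0 := by
    intro j x hx
    have h1 := mem_le_level e he0 _ _ x hx
    have h2 := hlev j x
    simp only [g]; omega
  have g1 : ∀ j, ∀ x, x ∉ betaSet (a j) (mu0 j) → 0 ≤ g j x := by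
    intro j x hx
    have h1 := not_mem_lt_level e he0 _ _ (hmu0core j) x hx
    have h2 := hlev j x
    simp only [g]; omega
  have hci := fun j => comp_ineq (a j) (lam j) (mu0 j) N (hN j) (hN0 j) (g j) (g0 j) (g1 j)
  have hsum : t = ∑ j, (∑ b ∈ Finset.range N, g j (bet (a j) (lam j) b) -
      ∑ b ∈ Finset.range N, g j (bet (a j) (mu0 j) b)) := by
    have h1 := sum_bt_eq e he0 a lam N bt
    have h2 := sum_bt_eq e he0 a mu0 N bt
    simp only [nb_eq e he0 a lam mu0 N hN hN0 hsame] at h1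
    rw [ht]
    simp only [g, Finset.sum_sub_distrib, Finset.sum_add_distrib]
    linarith
  have hge : g j0 p - g j0 (p + 1) ≤ t := by
    rw [hsum]
    refine (hci j0 p (p + 1) (Or.inr ⟨hp, hq⟩)).trans ?_
    refine Finset.single_le_sum (f := fun j => (∑ b ∈ Finset.range N, g j (bet (a j) (lam j) b) -
      ∑ b ∈ Finset.range N, g j (bet (a j) (mu0 j) b))) (fun j _ => ?_) (Finset.mem_univ j0)
    have := hci j 0 0 (Or.inl rfl)
    simpa using this
  have hfin : g j0 p - g j0 (p + 1) = Kconst e a mu0 i + 1 := by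
    simp only [g]
    rw [hpi, Int.toNat_natCast]
    have hq1 := Int.mul_ediv_add_emod (p + 1) e
    rw [hpi] at hq1
    by_cases h0 : i = 0
    · simp only [h0, if_true] at hbK ⊢
      rw [h0] at hq1
      have hd : p / (e : ℤ) = (p + 1) / e - 1 := by
        rw [Int.ediv_eq_iff_of_pos he']
        constructor <;> push_cast at hq1 <;> nlinarith
      have hmod : p % (e : ℤ) = e - 1 := by
        have := Int.mul_ediv_add_emod p e
        rw [hd] at this
        push_cast at hq1
        linarith
      rw [hmod, hd, show ((e : ℤ) - 1).toNat = e - 1 by omega]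
      linarith
    · simp only [h0, if_false] at hbK ⊢
      have hi' : (1 : ℤ) ≤ i := by omega
      have hie : (i : ℤ) < e := by exact_mod_cast hi
      have hd : p / (e : ℤ) = (p + 1) / e := by
        rw [Int.ediv_eq_iff_of_pos he']
        constructor <;> nlinarith
      have hmod : p % (e : ℤ) = i - 1 := by
        have := Int.mul_ediv_add_emod p e
        rw [hd] at this
        linarith
      rw [hmod, hd, show ((i : ℤ) - 1).toNat = i - 1 by omega]
      linarith
  omega

/-- Lemma 5.3: fix `i ∈ {0,…,e−1}` and let `B` be a block with
core block `C` such that `w(B) ≤ w(C) + K_i(C)·r` and `δ_i(B) ≥ 0`. Then no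
component of any multipartition `λ` in `B` has a bead on runner `i−1` with an
empty position immediately to its right on runner `i`. -/
theorem stmt_11 {e r : ℕ} (he : 2 ≤ e) (hr : 0 < r) (a : Fin r → ℤ)
    (i : ℕ) (hi : i < e)
    (mu0 : Multipartition r) (hmu0core : IsMulticore e a mu0)
    (hmu0min : MinimalWeight e a mu0)
    (lam : Multipartition r) (hsame : SameHub e a lam mu0)
    (hw : weight e a lam ≤ weight e a mu0 + (Kconst e a mu0 i : ℚ) * (r : ℚ))
    (hdel : 0 ≤ hub e a lam (i : ℤ)) :
    ∀ j : Fin r,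
      (i ≠ 0 → ¬∃ b : ℤ, b % (e : ℤ) = ((i : ℤ) - 1) % e ∧
        b ∈ betaSet (a j) (lam j) ∧ b + 1 ∉ betaSet (a j) (lam j)) ∧
      (i = 0 → ¬∃ b : ℤ, b % (e : ℤ) = ((e : ℤ) - 1) % e ∧
        b ∈ betaSet (a j) (lam j) ∧ b + 1 ∉ betaSet (a j) (lam j) ∧
        b + (e : ℤ) + 1 ∉ betaSet (a j) (lam j)) := by
  have he' : (0 : ℤ) < e := by omega
  have hie : (i : ℤ) < e := by exact_mod_cast hi
  intro j
  refine ⟨?_, ?_⟩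
  · rintro h0 ⟨b, hb, h1, h2⟩
    refine core_main he hr a i hi mu0 hmu0core hmu0min lam hsame hw j b ?_ h1 h2
    have : (b + 1) % (e : ℤ) = ((i : ℤ) - 1 + 1) % e := Int.ModEq.add_right 1 hb
    rw [this, sub_add_cancel, Int.emod_eq_of_lt (by omega) hie]
  · rintro h0 ⟨b, hb, h1, h2, -⟩
    refine core_main he hr a i hi mu0 hmu0core hmu0min lam hsame hw j b ?_ h1 h2
    have : (b + 1) % (e : ℤ) = ((e : ℤ) - 1 + 1) % e := Int.ModEq.add_right 1 hb
    rw [this, sub_add_cancel, Int.emod_self, h0]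
    rfl

end AK
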